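/- Let Λ be an artin algebra. Then Λ is self-injective (both Λ_Λ and _ΛΛ are injective) if and only if φ-dim(Λ) = 0, i.e. φ(M) = 0 for all finitely generated right Λ-modules M. -/

import Mathlib

open Module Function

universe u

variable (R : Type u) [Ring R]

/-- A finitely generated right `R`-module, encoded as a module over `Rᵐᵒᵖ`. -/
structure FGMod where
  carrier : Type u
  [isAddCommGroup : AddCommGroup carrier]
  [isModule : Module Rᵐᵒᵖ carrier]
  [isFinite : Module.Finite Rᵐᵒᵖ carrier]

attribute [instance] FGMod.isAddCommGroup FGMod.isModule FGMod.isFinite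

instance : CoeSort (FGMod R) (Type u) := ⟨FGMod.carrier⟩

variable {R}

/-- Isomorphism of f.g. right modules. -/
def FGMod.Iso (M N : FGMod R) : Prop := Nonempty (M ≃ₗ[Rᵐᵒᵖ] N)

/-- Direct sum. -/
def FGMod.prod (M N : FGMod R) : FGMod R := ⟨M × N⟩

/-- `M^k`, the direct sum of `k` copies of `M`. -/
def FGMod.pow (M : FGMod R) (k : ℕ) : FGMod R := ⟨Fin k → M⟩

/-- `N` is (isomorphic to) a direct summand of `M`. -/
def FGMod.IsSummand (N M : FGMod R) : Prop :=
  ∃ A B : Submodule Rᵐᵒᵖ M, IsCompl A B ∧ Nonempty (N ≃ₗ[Rᵐᵒᵖ] A)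

/-- `M` is indecomposable. -/
def FGMod.Indec (M : FGMod R) : Prop :=
  Nontrivial M ∧ ∀ A B : Submodule Rᵐᵒᵖ M, IsCompl A B → A = ⊥ ∨ B = ⊥

/-- `M` is projective. -/
def FGMod.Proj (M : FGMod R) : Prop := Module.Projective Rᵐᵒᵖ M

/-- `f : P → M` is a projective cover: `P` projective, `f` surjective with superfluous kernel. -/
def IsProjCover (M P : FGMod R) (f : P →ₗ[Rᵐᵒᵖ] M) : Prop :=
  P.Proj ∧ Surjective f ∧ ∀ N : Submodule Rᵐᵒᵖ P, N ⊔ LinearMap.ker f = ⊤ → N = ⊤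

/-- `N` is a (first) syzygy of `M`: the kernel of a projective cover of `M`. -/
def IsSyzygy (M N : FGMod R) : Prop :=
  ∃ (P : FGMod R) (f : P →ₗ[Rᵐᵒᵖ] M),
    IsProjCover M P f ∧ Nonempty (N ≃ₗ[Rᵐᵒᵖ] LinearMap.ker f)

/-- `N` is an `n`-th syzygy of `M`. -/
def IsSyzygyN : ℕ → FGMod R → FGMod R → Prop
  | 0, M, N => M.Iso N
  | n+1, M, N => ∃ L, IsSyzygy M L ∧ IsSyzygyN n L N

/-- `M` has projective dimension at most `n`. -/
def HasPdLE : ℕ → FGMod R → Prop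
  | 0, M => M.Proj
  | n+1, M => M.Proj ∨ ∃ N, IsSyzygy M N ∧ HasPdLE n N

/-- `M` has finite projective dimension. -/
def FinPd (M : FGMod R) : Prop := ∃ n, HasPdLE n M

/-- The projective dimension of `M` (junk value if infinite). -/
noncomputable def pdIT (M : FGMod R) : ℕ := sInf {n | HasPdLE n M}

variable (R)

/-- The Igusa–Todorov relations in the free abelian group on f.g. right modules:
`[A] - [B] - [C]` whenever `A ≅ B ⊕ C`, and `[P]` for `P` projective. -/
def ITRel : Set (FreeAbelianGroup (FGMod R)) :=
  {x | ∃ A B C : FGMod R, Nonempty (A ≃ₗ[Rᵐᵒᵖ] (B × C : Type u)) ∧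
        x = FreeAbelianGroup.of A - FreeAbelianGroup.of B - FreeAbelianGroup.of C} ∪
  {x | ∃ P : FGMod R, P.Proj ∧ x = FreeAbelianGroup.of P}

/-- The Igusa–Todorov group `K`. -/
def ITK := FreeAbelianGroup (FGMod R) ⧸ AddSubgroup.closure (ITRel R)

noncomputable instance : AddCommGroup (ITK R) :=
  QuotientAddGroup.Quotient.addCommGroup _

/-- The class `[M]` in `K`. -/
noncomputable def ITcls (M : FGMod R) : ITK R := QuotientAddGroup.mk (FreeAbelianGroup.of M)

/-- `⟨M⟩`: the subgroup of `K` generated by the indecomposable non-projective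
direct summands of `M`. -/
noncomputable def ITgen (M : FGMod R) : AddSubgroup (ITK R) :=
  AddSubgroup.closure
    {x | ∃ N : FGMod R, N.IsSummand M ∧ N.Indec ∧ ¬N.Proj ∧ x = ITcls R N}

/-- The rank of a subgroup of `K`. -/
noncomputable def rkIT (H : AddSubgroup (ITK R)) : ℕ :=
  Module.finrank ℤ (AddSubgroup.toIntSubmodule H)

/-- `OmK` is a syzygy endomorphism of `K`: a group endomorphism sending `[M]` to `[ΩM]`. -/
def IsSyzygyEnd (OmK : AddMonoid.End (ITK R)) : Prop :=
  ∀ M N : FGMod R, IsSyzygy M N → OmK (ITcls R M) = ITcls R N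

/-- The Igusa–Todorov function `φ`: the least `n` such that the rank of
`Ω^i⟨M⟩` equals that of `Ω^n⟨M⟩` for all `i ≥ n`. -/
noncomputable def phiIT (OmK : AddMonoid.End (ITK R)) (M : FGMod R) : ℕ :=
  sInf {n | ∀ i, n ≤ i →
    rkIT R ((ITgen R M).map ((OmK ^ i : AddMonoid.End (ITK R)) : ITK R →+ ITK R))
      = rkIT R ((ITgen R M).map ((OmK ^ n : AddMonoid.End (ITK R)) : ITK R →+ ITK R))}

/-- The second Igusa–Todorov function `ψ`. -/
noncomputable def psiIT (OmK : AddMonoid.End (ITK R)) (M : FGMod R) : ℕ :=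
  phiIT R OmK M + sSup {d | ∃ N X : FGMod R, IsSyzygyN (phiIT R OmK M) M N ∧
      X.IsSummand N ∧ FinPd X ∧ d = pdIT X}

/-- The socle of a module: the sum of its simple submodules. -/
def socleIT (M : FGMod R) : Submodule Rᵐᵒᵖ M :=
  sSup {S : Submodule Rᵐᵒᵖ M | IsSimpleModule Rᵐᵒᵖ S}


/-- maximal left ideals containing a finite intersection of maximal left ideals -/
theorem aux_quot_iso_of_inf_le {B : Type*} [Ring B] (s : Finset (Ideal B))
    (hs : ∀ n ∈ s, n.IsMaximal) (m : Ideal B) (hm : m.IsMaximal) (h : s.inf id ≤ m) :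
    ∃ n ∈ s, Nonempty ((B ⧸ n) ≃ₗ[B] (B ⧸ m)) := by
  classical
  induction s using Finset.induction with
  | empty => exact absurd (top_le_iff.mp (by simpa using h)) hm.ne_top
  | insert n s hn ih =>
    by_cases hJ : s.inf id ≤ m
    · obtain ⟨n', hn', e⟩ := ih (fun x hx => hs x (Finset.mem_insert_of_mem hx)) hJ
      exact ⟨n', Finset.mem_insert_of_mem hn', e⟩
    · refine ⟨n, Finset.mem_insert_self _ _, ?_⟩
      have hnm := hs n (Finset.mem_insert_self _ _)
      set J := s.inf id with hJdef
      rw [Finset.inf_insert] at h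
      have : IsSimpleModule B (B ⧸ n) := isSimpleModule_iff_isCoatom.mpr hnm.out
      have : IsSimpleModule B (B ⧸ m) := isSimpleModule_iff_isCoatom.mpr hm.out
      let g : J →ₗ[B] B ⧸ n := n.mkQ ∘ₗ J.subtype
      let g' : J →ₗ[B] B ⧸ m := m.mkQ ∘ₗ J.subtype
      have hker : LinearMap.ker g ≤ LinearMap.ker g' := by
        intro x hx
        simp only [g, g', LinearMap.mem_ker, LinearMap.comp_apply, Submodule.mkQ_apply,
          Submodule.Quotient.mk_eq_zero] at hx ⊢
        exact h ⟨hx, x.2⟩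
      have hg' : g' ≠ 0 := by
        intro h0
        apply hJ
        intro x hx
        have : g' ⟨x, hx⟩ = 0 := by rw [h0]; rfl
        simpa [g'] using this
      have hg : g ≠ 0 := by
        intro h0
        apply hg'
        rw [h0, LinearMap.ker_zero, top_le_iff, LinearMap.ker_eq_top] at hker
        exact hker
      have hgs := LinearMap.surjective_of_ne_zero hg
      let e := g.quotKerEquivOfSurjective hgs
      let t : (B ⧸ n) →ₗ[B] (B ⧸ m) := (LinearMap.ker g).liftQ g' hker ∘ₗ e.symm.toLinearMap
      have ht : t ≠ 0 := by
        intro h0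
        apply hg'
        ext x
        have : t (e (Submodule.Quotient.mk x)) = 0 := by rw [h0]; rfl
        simp only [t, LinearMap.comp_apply, LinearEquiv.coe_coe, LinearEquiv.symm_apply_apply] at this
        simpa using this
      exact ⟨LinearEquiv.ofBijective t (LinearMap.bijective_of_ne_zero ht)⟩

theorem aux_quot_iso_of_ann_le {B : Type*} [Ring B] [IsArtinianRing B] {S : Type*}
    [AddCommGroup S] [Module B S] [IsSimpleModule B S] (m : Ideal B) (hm : m.IsMaximal)
    (h : Module.annihilator B S ≤ m) : Nonempty (S ≃ₗ[B] (B ⧸ m)) := by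
  classical
  let f : {t : S // t ≠ 0} → Ideal B := fun t => LinearMap.ker (LinearMap.toSpanSingleton B S t.1)
  obtain ⟨s, hs⟩ := Finset.exists_inf_le f
  have h1 : (s.image f).inf id ≤ m := by
    refine le_trans ?_ h
    intro b hb
    rw [Finset.inf_image, Function.id_comp] at hb
    rw [Module.mem_annihilator]
    intro t
    by_cases ht : t = 0
    · simp [ht]
    · have := hs ⟨t, ht⟩ hb
      simpa [f] using this
  obtain ⟨n, hn, ⟨e⟩⟩ := aux_quot_iso_of_inf_le (s.image f) (by
    intro n hn
    obtain ⟨t, _, rfl⟩ := Finset.mem_image.mp hn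
    exact IsSimpleModule.ker_toSpanSingleton_isMaximal B t.2) m hm h1
  obtain ⟨t, _, rfl⟩ := Finset.mem_image.mp hn
  have := LinearMap.quotKerEquivOfSurjective (LinearMap.toSpanSingleton B S t.1)
    (IsSimpleModule.toSpanSingleton_surjective B t.2)
  exact ⟨this.symm.trans e⟩

theorem aux_inj_ext {B : Type u} [Ring B] {Q : Type u} [AddCommGroup Q] [Module B Q]
    (hQ : Module.Injective B Q) {M N : Type u} [AddCommGroup M] [Module B M]
    [AddCommGroup N] [Module B N] (f : M →ₗ[B] N) (g : M →ₗ[B] Q)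
    (h : LinearMap.ker f ≤ LinearMap.ker g) : ∃ t : N →ₗ[B] Q, ∀ x, t (f x) = g x := by
  obtain ⟨t, ht⟩ := hQ.out ((LinearMap.ker f).liftQ f le_rfl)
    (LinearMap.ker_eq_bot.mp (Submodule.ker_liftQ_eq_bot _ _ _ le_rfl))
    ((LinearMap.ker f).liftQ g h)
  exact ⟨t, fun x => by simpa using ht (Submodule.Quotient.mk x)⟩

section selfinj
open MulOpposite

variable {L : Type u} [Ring L]

/-- left multiplication as a right module map -/
def auxLm (a : L) : L →ₗ[Lᵐᵒᵖ] L where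
  toFun x := a * x
  map_add' x y := mul_add a x y
  map_smul' b x := by simp [MulOpposite.smul_eq_mul_unop, mul_assoc]

theorem aux_lin_eq (h : L →ₗ[Lᵐᵒᵖ] L) (x : L) : h x = h 1 * x := by
  have := h.map_smul (op x) 1
  simpa using this

theorem aux_lr (hL : Module.Injective Lᵐᵒᵖ L) (I : Ideal L) (hI : I.FG) (x : L)
    (hx : ∀ c, (∀ y ∈ I, y * c = 0) → x * c = 0) : x ∈ I := by
  classical
  obtain ⟨n, y, rfl⟩ := Submodule.fg_iff_exists_fin_generating_family.mp hI
  obtain ⟨t, ht⟩ := aux_inj_ext hL (LinearMap.pi fun i : Fin n => auxLm (y i)) (auxLm x) (by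
    intro c hc
    apply hx c
    intro z hz
    have hc' : ∀ i, y i * c = 0 := fun i => congrFun (LinearMap.mem_ker.mp hc) i
    induction hz using Submodule.span_induction with
    | mem z hz => obtain ⟨i, rfl⟩ := hz; exact hc' i
    | zero => simp
    | add a b _ _ ha hb => rw [add_mul, ha, hb, add_zero]
    | smul a b _ hb => rw [smul_eq_mul, mul_assoc, hb, mul_zero])
  have h1 := ht 1
  have h2 : (auxLm x) 1 = x := mul_one x
  have h3 : (LinearMap.pi fun i : Fin n => auxLm (y i)) (1 : L) = y := by
    ext i; exact mul_one (y i)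
  rw [h2, h3] at h1
  have h4 : t y = ∑ i, t (Pi.single i 1) * y i := by
    conv_lhs => rw [← Finset.univ_sum_single y]
    rw [map_sum]
    refine Finset.sum_congr rfl fun i _ => ?_
    have := t.map_smul (op (y i)) (Pi.single i 1)
    rw [← Pi.single_smul] at this
    simpa using this
  rw [← h1, h4]
  exact Submodule.sum_mem _ fun i _ => Ideal.mul_mem_left _ _ (Submodule.subset_span ⟨i, rfl⟩)

theorem aux_simple_step [IsArtinianRing Lᵐᵒᵖ] [IsNoetherianRing L]
    (hL : Module.Injective Lᵐᵒᵖ L)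
    (m : Ideal Lᵐᵒᵖ) (hm : m.IsMaximal) : ∃ m' : Ideal Lᵐᵒᵖ, m'.IsMaximal ∧
      ∃ j : (Lᵐᵒᵖ ⧸ m') →ₗ[Lᵐᵒᵖ] L, Injective j ∧
        ∀ t, ∀ a : L, op a ∈ Module.annihilator Lᵐᵒᵖ (Lᵐᵒᵖ ⧸ m) → a * j t = 0 := by
  let N : Submodule Lᵐᵒᵖ L :=
    { carrier := {c | ∀ a : L, op a ∈ Module.annihilator Lᵐᵒᵖ (Lᵐᵒᵖ ⧸ m) → a * c = 0}
      add_mem' := fun {x y} hx hy a ha => by rw [mul_add, hx a ha, hy a ha, add_zero]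
      zero_mem' := fun a _ => mul_zero a
      smul_mem' := fun b x hx a ha => by
        rw [MulOpposite.smul_eq_mul_unop, ← mul_assoc, hx a ha, zero_mul] }
  let I : Ideal L :=
    { carrier := {a | op a ∈ Module.annihilator Lᵐᵒᵖ (Lᵐᵒᵖ ⧸ m)}
      add_mem' := fun {x y} hx hy => by
        simp only [Set.mem_ofPred_eq, op_add] at *; exact add_mem hx hy
      zero_mem' := by simp
      smul_mem' := fun b x hx => by
        simp only [Set.mem_ofPred_eq, smul_eq_mul, op_mul] at *
        exact Ideal.mul_mem_right _ _ hx }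
  have := (isSimpleModule_iff_isCoatom (R := Lᵐᵒᵖ)).mpr hm.out
  have := IsSimpleModule.nontrivial Lᵐᵒᵖ (Lᵐᵒᵖ ⧸ m)
  have hN : N ≠ ⊥ := by
    intro h0
    have : (1 : L) ∈ I := by
      apply aux_lr hL I (IsNoetherian.noetherian I)
      intro c hc
      have : c ∈ N := fun a ha => hc a ha
      rw [h0, Submodule.mem_bot] at this
      rw [this, mul_zero]
    have h1 : (1 : Lᵐᵒᵖ) ∈ Module.annihilator Lᵐᵒᵖ (Lᵐᵒᵖ ⧸ m) := this
    obtain ⟨t, ht⟩ := exists_ne (0 : Lᵐᵒᵖ ⧸ m)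
    rw [Module.mem_annihilator] at h1
    exact ht (by simpa using h1 t)
  have : IsArtinian Lᵐᵒᵖ L :=
    isArtinian_of_linearEquiv (MulOpposite.opLinearEquiv Lᵐᵒᵖ : L ≃ₗ[Lᵐᵒᵖ] Lᵐᵒᵖ).symm
  obtain ⟨S, hS, hSN⟩ := (eq_bot_or_exists_atom_le N).resolve_left hN
  have := isSimpleModule_iff_isAtom.mpr hS
  obtain ⟨m', hm', ⟨e⟩⟩ := isSimpleModule_iff_quot_maximal.mp this
  refine ⟨m', hm', S.subtype ∘ₗ e.symm.toLinearMap, ?_, ?_⟩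
  · exact S.injective_subtype.comp e.symm.injective
  · intro t a ha
    exact hSN (e.symm t).2 a ha

set_option maxHeartbeats 1000000 in
theorem aux_simple_embeds [IsArtinianRing Lᵐᵒᵖ] [IsNoetherianRing L]
    (hL : Module.Injective Lᵐᵒᵖ L)
    (m : Ideal Lᵐᵒᵖ) (hm : m.IsMaximal) :
      ∃ j : (Lᵐᵒᵖ ⧸ m) →ₗ[Lᵐᵒᵖ] L, Injective j := by
  classical
  let Mx := {m : Ideal Lᵐᵒᵖ // m.IsMaximal}
  let st : Setoid Mx :=
    { r := fun m n => Nonempty ((Lᵐᵒᵖ ⧸ m.1) ≃ₗ[Lᵐᵒᵖ] (Lᵐᵒᵖ ⧸ n.1))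
      iseqv := ⟨fun _ => ⟨LinearEquiv.refl _ _⟩, fun ⟨e⟩ => ⟨e.symm⟩,
        fun ⟨e⟩ ⟨f⟩ => ⟨e.trans f⟩⟩ }
  have hfin : Finite (Quotient st) := by
    obtain ⟨s, hs⟩ := Finset.exists_inf_le (Subtype.val : Mx → Ideal Lᵐᵒᵖ)
    refine Finite.of_surjective (fun x : s => (Quotient.mk st x.1)) ?_
    intro q
    induction q using Quotient.inductionOn with
    | h m =>
      obtain ⟨n, hn, e⟩ := aux_quot_iso_of_inf_le (s.image Subtype.val) (by
        intro n hn
        obtain ⟨t, _, rfl⟩ := Finset.mem_image.mp hn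
        exact t.2) m.1 m.2 (by rw [Finset.inf_image]; exact hs m)
      obtain ⟨t, ht, rfl⟩ := Finset.mem_image.mp hn
      exact ⟨⟨t, ht⟩, Quotient.sound e⟩
  choose F hF j hj hann using fun m : Mx => aux_simple_step hL m.1 m.2
  have key : ∀ m n : Mx, Nonempty ((Lᵐᵒᵖ ⧸ F m) ≃ₗ[Lᵐᵒᵖ] (Lᵐᵒᵖ ⧸ F n)) →
      Nonempty ((Lᵐᵒᵖ ⧸ m.1) ≃ₗ[Lᵐᵒᵖ] (Lᵐᵒᵖ ⧸ n.1)) := by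
    rintro m n ⟨e⟩
    obtain ⟨h, hh⟩ := hL.out (j m) (hj m) (j n ∘ₗ e.toLinearMap)
    have := (isSimpleModule_iff_isCoatom (R := Lᵐᵒᵖ)).mpr (hF m).out
    have := IsSimpleModule.nontrivial Lᵐᵒᵖ (Lᵐᵒᵖ ⧸ F m)
    have := (isSimpleModule_iff_isCoatom (R := Lᵐᵒᵖ)).mpr m.2.out
    have := (isSimpleModule_iff_isCoatom (R := Lᵐᵒᵖ)).mpr n.2.out
    obtain ⟨t, ht⟩ := exists_ne (0 : Lᵐᵒᵖ ⧸ F m)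
    have h1 : h 1 * j m t = j n (e t) := by rw [← aux_lin_eq, hh]; rfl
    have h2 : j n (e t) ≠ 0 := by
      rw [Ne, map_eq_zero_iff _ (hj n), map_eq_zero_iff _ e.injective]; exact ht
    have hne : Module.annihilator Lᵐᵒᵖ (Lᵐᵒᵖ ⧸ m.1) ⊔ Module.annihilator Lᵐᵒᵖ (Lᵐᵒᵖ ⧸ n.1) ≠ ⊤ := by
      intro htop
      have h1m : (1 : Lᵐᵒᵖ) ∈ Module.annihilator Lᵐᵒᵖ (Lᵐᵒᵖ ⧸ m.1) ⊔
        Module.annihilator Lᵐᵒᵖ (Lᵐᵒᵖ ⧸ n.1) := by rw [htop]; trivial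
      obtain ⟨a, ha, b, hb, hab⟩ := Submodule.mem_sup.mp h1m
      apply h2
      have e1 : unop a * j n (e t) = 0 := by
        rw [← h1, ← mul_assoc]
        apply hann m
        rw [op_mul]
        exact Ideal.mul_mem_left _ _ (by simpa using ha)
      have e2 : unop b * j n (e t) = 0 := hann n _ _ (by simpa using hb)
      have e3 : unop a + unop b = 1 := by rw [← unop_add, hab, unop_one]
      rw [← one_mul (j n (e t)), ← e3, add_mul, e1, e2, add_zero]
    obtain ⟨p, hp, hle⟩ := Ideal.exists_le_maximal _ hne
    obtain ⟨e1⟩ := aux_quot_iso_of_ann_le p hp (le_sup_left.trans hle)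
    obtain ⟨e2⟩ := aux_quot_iso_of_ann_le p hp (le_sup_right.trans hle)
    exact ⟨e1.trans e2.symm⟩
  let G : Quotient st → Quotient st := fun q => Quotient.mk st ⟨F q.out, hF _⟩
  have hG : Injective G := by
    intro q1 q2 h
    have := key _ _ (Quotient.exact h)
    rw [← Quotient.out_eq q1, ← Quotient.out_eq q2]
    exact Quotient.sound this
  obtain ⟨q, hq⟩ := (Finite.injective_iff_surjective.mp hG) (Quotient.mk st ⟨m, hm⟩)
  obtain ⟨e⟩ := Quotient.exact hq
  exact ⟨j q.out ∘ₗ e.symm.toLinearMap, (hj _).comp e.symm.injective⟩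

theorem aux_rl [IsArtinianRing Lᵐᵒᵖ] [IsNoetherianRing L]
    (hL : Module.Injective Lᵐᵒᵖ L) (I : Submodule Lᵐᵒᵖ L) (x : L) (hx : x ∉ I) :
    ∃ a : L, (∀ y ∈ I, a * y = 0) ∧ a * x ≠ 0 := by
  let f : Lᵐᵒᵖ →ₗ[Lᵐᵒᵖ] (L ⧸ I) := LinearMap.toSpanSingleton Lᵐᵒᵖ (L ⧸ I) (Submodule.Quotient.mk x)
  have hf : (LinearMap.ker f) ≠ ⊤ := by
    intro h
    have : (1 : Lᵐᵒᵖ) ∈ LinearMap.ker f := by rw [h]; trivial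
    simp only [f, LinearMap.mem_ker, LinearMap.toSpanSingleton_apply, one_smul,
      Submodule.Quotient.mk_eq_zero] at this
    exact hx this
  obtain ⟨m, hm, hle⟩ := Ideal.exists_le_maximal _ hf
  obtain ⟨j, hj⟩ := aux_simple_embeds hL m hm
  obtain ⟨h, hh⟩ := aux_inj_ext hL f (j ∘ₗ m.mkQ) (by
    intro b hb
    have h0 : m.mkQ b = 0 := (Submodule.Quotient.mk_eq_zero m).mpr (hle hb)
    rw [LinearMap.mem_ker, LinearMap.comp_apply, h0, map_zero])
  refine ⟨(h ∘ₗ I.mkQ) 1, fun y hy => ?_, ?_⟩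
  · rw [← aux_lin_eq]
    rw [LinearMap.comp_apply, Submodule.mkQ_apply, (Submodule.Quotient.mk_eq_zero I).mpr hy,
      map_zero]
  · rw [← aux_lin_eq]
    have h1 := hh 1
    simp only [f, LinearMap.toSpanSingleton_apply, one_smul] at h1
    rw [LinearMap.comp_apply, Submodule.mkQ_apply, h1, LinearMap.comp_apply, Ne,
      map_eq_zero_iff _ hj, Submodule.mkQ_apply, Submodule.Quotient.mk_eq_zero]
    exact fun h => hm.ne_top ((Ideal.eq_top_iff_one m).mpr h)

theorem aux_left_inj [IsArtinianRing Lᵐᵒᵖ] [IsNoetherianRing L]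
    (hL : Module.Injective Lᵐᵒᵖ L) : Module.Injective L L := by
  apply Module.Baer.injective
  have main : ∀ (I : Ideal L) (_ : I.FG) (f : I →ₗ[L] L), ∃ c, ∀ x (hx : x ∈ I), f ⟨x, hx⟩ = x * c := by
    intro I hI
    induction I, hI using Submodule.fg_induction with
    | singleton x =>
      intro f
      have hxx : x ∈ Submodule.span L {x} := Submodule.mem_span_singleton_self x
      have : f ⟨x, hxx⟩ ∈ LinearMap.range (auxLm x) := by
        by_contra hn
        obtain ⟨a, ha, hne⟩ := aux_rl hL _ _ hn
        apply hne
        have h0 : a * x = 0 := by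
          have := ha x ⟨1, mul_one x⟩
          exact this
        rw [← smul_eq_mul, ← map_smul]
        have : a • (⟨x, hxx⟩ : Submodule.span L {x}) = 0 := Subtype.ext h0
        rw [this, map_zero]
      obtain ⟨c, hc⟩ := this
      refine ⟨c, fun y hy => ?_⟩
      obtain ⟨b, rfl⟩ := Submodule.mem_span_singleton.mp hy
      have : (⟨b • x, hy⟩ : Submodule.span L {x}) = b • ⟨x, hxx⟩ := rfl
      rw [this, map_smul, ← hc, smul_eq_mul, smul_eq_mul, mul_assoc]
      rfl
    | sup I₁ I₂ h₁ h₂ ih₁ ih₂ =>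
      intro f
      obtain ⟨c₁, hc₁⟩ := ih₁ (f ∘ₗ Submodule.inclusion le_sup_left)
      obtain ⟨c₂, hc₂⟩ := ih₂ (f ∘ₗ Submodule.inclusion le_sup_right)
      let r : Ideal L → Submodule Lᵐᵒᵖ L := fun I =>
        { carrier := {c | ∀ a ∈ I, a * c = 0}
          add_mem' := fun {x y} hx hy a ha => by rw [mul_add, hx a ha, hy a ha, add_zero]
          zero_mem' := fun a _ => mul_zero a
          smul_mem' := fun b x hx a ha => by
            rw [MulOpposite.smul_eq_mul_unop, ← mul_assoc, hx a ha, zero_mul] }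
      have : c₁ - c₂ ∈ r I₁ ⊔ r I₂ := by
        by_contra hn
        obtain ⟨a, ha, hne⟩ := aux_rl hL _ _ hn
        apply hne
        have ha1 : a ∈ I₁ := aux_lr hL I₁ h₁ a fun c hc => ha c (Submodule.mem_sup_left hc)
        have ha2 : a ∈ I₂ := aux_lr hL I₂ h₂ a fun c hc => ha c (Submodule.mem_sup_right hc)
        rw [mul_sub, ← hc₁ a ha1, ← hc₂ a ha2]
        exact sub_self _
      obtain ⟨u, hu, v, hv, huv⟩ := Submodule.mem_sup.mp this
      have hcc : c₁ - u = c₂ + v := by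
        rw [sub_eq_iff_eq_add, add_assoc, add_comm v u, huv]; abel
      refine ⟨c₁ - u, fun x hx => ?_⟩
      obtain ⟨y, hy, z, hz, rfl⟩ := Submodule.mem_sup.mp hx
      have e1 : f ⟨y, le_sup_left (a := I₁) hy⟩ = y * (c₁ - u) := by
        rw [mul_sub, hu y hy, sub_zero]; exact hc₁ y hy
      have e2 : f ⟨z, le_sup_right (a := I₁) hz⟩ = z * (c₁ - u) := by
        rw [hcc, mul_add, hv z hz, add_zero]; exact hc₂ z hz
      rw [add_mul, ← e1, ← e2, ← map_add]
      rfl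
  intro I g
  obtain ⟨c, hc⟩ := main I (IsNoetherian.noetherian I) g
  exact ⟨LinearMap.toSpanSingleton L L c, fun x hx => by
    rw [hc x hx]; rfl⟩

end selfinj

section ITbasic
open MulOpposite
variable {L : Type u} [Ring L]

theorem aux_cls_prod (A B C : FGMod L) (e : A ≃ₗ[Lᵐᵒᵖ] (B × C : Type u)) :
    ITcls L A = ITcls L B + ITcls L C := by
  have : FreeAbelianGroup.of A - FreeAbelianGroup.of B - FreeAbelianGroup.of C ∈
      AddSubgroup.closure (ITRel L) :=
    AddSubgroup.subset_closure (Or.inl ⟨A, B, C, ⟨e⟩, rfl⟩)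
  have h := (QuotientAddGroup.eq_zero_iff _).mpr this
  have h2 : ITcls L A - ITcls L B - ITcls L C = 0 := h
  rw [sub_sub, sub_eq_zero] at h2
  exact h2

theorem aux_cls_proj (P : FGMod L) (hP : P.Proj) : ITcls L P = 0 :=
  (QuotientAddGroup.eq_zero_iff _).mpr (AddSubgroup.subset_closure (Or.inr ⟨P, hP, rfl⟩))

theorem aux_cls_prod_proj (A B C : FGMod L) (hC : C.Proj) (e : A ≃ₗ[Lᵐᵒᵖ] (B × C : Type u)) :
    ITcls L A = ITcls L B := by
  rw [aux_cls_prod A B C e, aux_cls_proj C hC, add_zero]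

theorem aux_cls_iso (A B : FGMod L) (e : A ≃ₗ[Lᵐᵒᵖ] B) : ITcls L A = ITcls L B := by
  have hp : (⟨PUnit.{u+1}⟩ : FGMod L).Proj :=
    (inferInstance : Module.Projective Lᵐᵒᵖ PUnit.{u+1})
  exact aux_cls_prod_proj A B ⟨PUnit.{u+1}⟩ hp
    (e.trans (LinearEquiv.prodUnique (R := Lᵐᵒᵖ) (M := B) (M₂ := PUnit.{u+1})).symm)

theorem aux_hom_ext {G : Type*} [AddCommGroup G] (f g : ITK L →+ G)
    (h : ∀ M, f (ITcls L M) = g (ITcls L M)) : f = g := by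
  have h1 : f.comp (QuotientAddGroup.mk' (AddSubgroup.closure (ITRel L))) =
      g.comp (QuotientAddGroup.mk' (AddSubgroup.closure (ITRel L))) :=
    FreeAbelianGroup.lift_ext _ _ h
  ext x
  obtain ⟨y, rfl⟩ := QuotientAddGroup.mk'_surjective (AddSubgroup.closure (ITRel L)) x
  exact DFunLike.congr_fun h1 y

theorem aux_hom_lift {G : Type*} [AddCommGroup G] (F : FGMod L → G)
    (hadd : ∀ A B C : FGMod L, Nonempty (A ≃ₗ[Lᵐᵒᵖ] (B × C : Type u)) → F A = F B + F C)
    (hproj : ∀ P : FGMod L, P.Proj → F P = 0) :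
    ∃ f : ITK L →+ G, ∀ M, f (ITcls L M) = F M := by
  refine ⟨QuotientAddGroup.lift (AddSubgroup.closure (ITRel L)) (FreeAbelianGroup.lift F) ?_, ?_⟩
  · rw [AddSubgroup.closure_le]
    rintro x (⟨A, B, C, e, rfl⟩ | ⟨P, hP, rfl⟩)
    · simp [AddMonoidHom.mem_ker, hadd A B C e]
    · simp [AddMonoidHom.mem_ker, hproj P hP]
  · intro M
    exact FreeAbelianGroup.lift_apply_of F M

variable [IsArtinianRing Lᵐᵒᵖ]

theorem aux_exists_free (M : FGMod L) : ∃ (n : ℕ) (f : (Fin n → L) →ₗ[Lᵐᵒᵖ] M), Surjective f := by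
  obtain ⟨n, f, hf⟩ := Module.Finite.exists_fin' Lᵐᵒᵖ M
  let e : (Fin n → L) ≃ₗ[Lᵐᵒᵖ] (Fin n → Lᵐᵒᵖ) :=
    LinearEquiv.piCongrRight fun _ => MulOpposite.opLinearEquiv Lᵐᵒᵖ
  exact ⟨n, f ∘ₗ e.toLinearMap, hf.comp e.surjective⟩

instance aux_proj_self : Module.Projective Lᵐᵒᵖ L :=
  Module.Projective.of_equiv (MulOpposite.opLinearEquiv Lᵐᵒᵖ : L ≃ₗ[Lᵐᵒᵖ] Lᵐᵒᵖ).symm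

instance aux_fin_self : Module.Finite Lᵐᵒᵖ L :=
  Module.Finite.equiv (MulOpposite.opLinearEquiv Lᵐᵒᵖ : L ≃ₗ[Lᵐᵒᵖ] Lᵐᵒᵖ).symm

instance aux_proj_pi (n : ℕ) : Module.Projective Lᵐᵒᵖ (Fin n → L) :=
  Module.Projective.of_equiv (LinearEquiv.piCongrRight fun _ : Fin n =>
    (MulOpposite.opLinearEquiv Lᵐᵒᵖ : L ≃ₗ[Lᵐᵒᵖ] Lᵐᵒᵖ).symm)

theorem aux_toNat_lt {a b : ℕ∞} (h : a < b) (hb : b ≠ ⊤) : a.toNat < b.toNat := by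
  lift b to ℕ using hb
  lift a to ℕ using h.ne_top
  exact_mod_cast h

theorem aux_exists_cover (M : FGMod L) : ∃ (P : FGMod L) (f : P →ₗ[Lᵐᵒᵖ] M), IsProjCover M P f := by
  classical
  have hex : ∃ n, ∃ (P : FGMod L) (f : P →ₗ[Lᵐᵒᵖ] M), P.Proj ∧ Surjective f ∧
      (Module.length Lᵐᵒᵖ P).toNat = n := by
    obtain ⟨n, f, hf⟩ := aux_exists_free M
    exact ⟨_, ⟨Fin n → L⟩, f, (inferInstance : Module.Projective Lᵐᵒᵖ (Fin n → L)), hf, rfl⟩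
  obtain ⟨P, f, hP, hf, hlen⟩ := Nat.find_spec hex
  refine ⟨P, f, hP, hf, ?_⟩
  intro N hN
  by_contra hNt
  have hP' : Module.Projective Lᵐᵒᵖ P := hP
  have hs : Surjective (f.domRestrict N) := by
    intro y
    obtain ⟨x, rfl⟩ := hf y
    have : x ∈ N ⊔ LinearMap.ker f := by rw [hN]; trivial
    obtain ⟨a, ha, b, hb, rfl⟩ := Submodule.mem_sup.mp this
    exact ⟨⟨a, ha⟩, by simp [LinearMap.mem_ker.mp hb]⟩
  obtain ⟨h, hh⟩ := Module.projective_lifting_property (f.domRestrict N) f hs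
  let g : Module.End Lᵐᵒᵖ P := N.subtype ∘ₗ h
  have hfg : ∀ x, f (g x) = f x := fun x => LinearMap.congr_fun hh x
  have hfgn : ∀ n x, f ((g ^ n) x) = f x := by
    intro n
    induction n with
    | zero => intro x; rfl
    | succ n ih => intro x; rw [pow_succ', Module.End.mul_apply, hfg, ih]
  obtain ⟨n, hn, hc⟩ := ((Filter.eventually_ge_atTop 1).and
    (LinearMap.eventually_isCompl_ker_pow_range_pow g)).exists
  have hle : LinearMap.range (g ^ n) ≤ N := by
    rintro _ ⟨x, rfl⟩
    obtain ⟨m, rfl⟩ := Nat.exists_eq_add_of_le' hn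
    rw [pow_succ', Module.End.mul_apply]
    exact (h _).2
  have hne : LinearMap.range (g ^ n) ≠ ⊤ := fun h => hNt (top_le_iff.mp (h ▸ hle))
  have hlt := Submodule.length_lt hne
  have hpr : Module.Projective Lᵐᵒᵖ (LinearMap.range (g ^ n)) := by
    refine Module.Projective.of_split (LinearMap.range (g ^ n)).subtype
      (Submodule.projectionOnto _ _ hc.symm) ?_
    ext x
    simp
  refine Nat.find_min hex (m := (Module.length Lᵐᵒᵖ (LinearMap.range (g ^ n))).toNat) ?_
    ⟨⟨LinearMap.range (g ^ n)⟩, f.domRestrict _, hpr, ?_, rfl⟩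
  · rw [← hlen]
    exact aux_toNat_lt hlt Module.length_ne_top
  · intro y
    obtain ⟨x, rfl⟩ := hf y
    exact ⟨⟨(g ^ n) x, x, rfl⟩, hfgn n x⟩

theorem aux_schanuel (M Q Q' : FGMod L) (h : Q →ₗ[Lᵐᵒᵖ] M) (h' : Q' →ₗ[Lᵐᵒᵖ] M)
    (hQ : Q.Proj) (hQ' : Q'.Proj) (hs : Surjective h) (hs' : Surjective h') :
    ITcls L ⟨LinearMap.ker h⟩ = ITcls L ⟨LinearMap.ker h'⟩ := by
  have : Module.Projective Lᵐᵒᵖ Q := hQ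
  have : Module.Projective Lᵐᵒᵖ Q' := hQ'
  obtain ⟨a, ha⟩ := Module.projective_lifting_property h h' hs
  obtain ⟨b, hb⟩ := Module.projective_lifting_property h' h hs'
  have ha' : ∀ x, h (a x) = h' x := fun x => LinearMap.congr_fun ha x
  have hb' : ∀ x, h' (b x) = h x := fun x => LinearMap.congr_fun hb x
  let X := LinearMap.ker (h.coprod h')
  have hX : ∀ x : X, h x.1.1 + h' x.1.2 = 0 := fun x => x.2
  let e1 : X ≃ₗ[Lᵐᵒᵖ] (LinearMap.ker h × Q') :=
    { toFun := fun x => (⟨x.1.1 + a x.1.2, by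
        rw [LinearMap.mem_ker, map_add, ha']; exact hX x⟩, x.1.2)
      map_add' := fun x y => by
        ext <;> simp [add_add_add_comm]
      map_smul' := fun r x => by
        ext <;> simp
      invFun := fun y => ⟨(y.1.1 - a y.2, y.2), by
        have := LinearMap.mem_ker.mp y.1.2
        simp [X, LinearMap.mem_ker, ha', this]⟩
      left_inv := fun x => by ext <;> simp
      right_inv := fun y => by ext <;> simp }
  let e2 : X ≃ₗ[Lᵐᵒᵖ] (LinearMap.ker h' × Q) :=
    { toFun := fun x => (⟨x.1.2 + b x.1.1, by
        rw [LinearMap.mem_ker, map_add, hb', add_comm]; exact hX x⟩, x.1.1)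
      map_add' := fun x y => by
        ext <;> simp [add_add_add_comm]
      map_smul' := fun r x => by
        ext <;> simp
      invFun := fun y => ⟨(y.2, y.1.1 - b y.2), by
        have := LinearMap.mem_ker.mp y.1.2
        simp [X, LinearMap.mem_ker, hb', this]⟩
      left_inv := fun x => by ext <;> simp
      right_inv := fun y => by ext <;> simp }
  rw [← aux_cls_prod_proj ⟨X⟩ ⟨LinearMap.ker h⟩ Q' hQ' e1,
    ← aux_cls_prod_proj ⟨X⟩ ⟨LinearMap.ker h'⟩ Q hQ e2]

theorem aux_Om_ker (OmK : AddMonoid.End (ITK L)) (hOm : IsSyzygyEnd L OmK)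
    (M Q : FGMod L) (h : Q →ₗ[Lᵐᵒᵖ] M) (hQ : Q.Proj) (hs : Surjective h) :
    OmK (ITcls L M) = ITcls L ⟨LinearMap.ker h⟩ := by
  obtain ⟨P, f, hf⟩ := aux_exists_cover M
  rw [hOm M ⟨LinearMap.ker f⟩ ⟨P, f, hf, ⟨LinearEquiv.refl _ _⟩⟩]
  exact aux_schanuel M P Q f h hf.1 hQ hf.2.1 hs

/-- left approximation by projectives -/
def AuxApx (M P : FGMod L) (f : M →ₗ[Lᵐᵒᵖ] P) : Prop :=
  P.Proj ∧ ∀ g : M →ₗ[Lᵐᵒᵖ] L, ∃ t : P →ₗ[Lᵐᵒᵖ] L, ∀ x, t (f x) = g x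

theorem AuxApx.ext {M P : FGMod L} {f : M →ₗ[Lᵐᵒᵖ] P} (hf : AuxApx M P f) (Q : FGMod L)
    (hQ : Q.Proj) (g : M →ₗ[Lᵐᵒᵖ] Q) : ∃ t : P →ₗ[Lᵐᵒᵖ] Q, ∀ x, t (f x) = g x := by
  have : Module.Projective Lᵐᵒᵖ Q := hQ
  obtain ⟨n, p, hp⟩ := aux_exists_free Q
  obtain ⟨s, hs⟩ := Module.projective_lifting_property p LinearMap.id hp
  choose t ht using fun i => hf.2 (LinearMap.proj i ∘ₗ s ∘ₗ g)
  refine ⟨p ∘ₗ LinearMap.pi t, fun x => ?_⟩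
  have h1 : (LinearMap.pi t) (f x) = s (g x) := by
    ext i; exact ht i x
  rw [LinearMap.comp_apply, h1]
  exact LinearMap.congr_fun hs (g x)

theorem aux_coker_iso {P N C : Type u} [AddCommGroup P] [AddCommGroup N] [AddCommGroup C]
    [Module Lᵐᵒᵖ P] [Module Lᵐᵒᵖ N] [Module Lᵐᵒᵖ C] (f : N →ₗ[Lᵐᵒᵖ] P) (g : P →ₗ[Lᵐᵒᵖ] C)
    (hg : Surjective g) (h : LinearMap.ker g = LinearMap.range f) :
    Nonempty ((P ⧸ LinearMap.range f) ≃ₗ[Lᵐᵒᵖ] C) :=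
  ⟨(Submodule.quotEquivOfEq _ _ h.symm).trans (g.quotKerEquivOfSurjective hg)⟩

theorem aux_apx_eq {M P P' : FGMod L} {f : M →ₗ[Lᵐᵒᵖ] P} {f' : M →ₗ[Lᵐᵒᵖ] P'}
    (hf : AuxApx M P f) (hf' : AuxApx M P' f') :
    ITcls L ⟨P ⧸ LinearMap.range f⟩ = ITcls L ⟨P' ⧸ LinearMap.range f'⟩ := by
  obtain ⟨a, ha⟩ := hf.ext P' hf'.1 f'
  obtain ⟨b, hb⟩ := hf'.ext P hf.1 f
  let F : M →ₗ[Lᵐᵒᵖ] (P × P' : Type u) := f.prod f'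
  let g1 : (P × P' : Type u) →ₗ[Lᵐᵒᵖ] ((P ⧸ LinearMap.range f) × P' : Type u) :=
    ((LinearMap.range f).mkQ ∘ₗ LinearMap.fst _ _ _).prod
      (LinearMap.snd _ _ _ - a ∘ₗ LinearMap.fst _ _ _)
  let g2 : (P × P' : Type u) →ₗ[Lᵐᵒᵖ] ((P' ⧸ LinearMap.range f') × P : Type u) :=
    ((LinearMap.range f').mkQ ∘ₗ LinearMap.snd _ _ _).prod
      (LinearMap.fst _ _ _ - b ∘ₗ LinearMap.snd _ _ _)
  obtain ⟨e1⟩ := aux_coker_iso F g1 (by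
    rintro ⟨y, z⟩
    obtain ⟨y, rfl⟩ := Submodule.mkQ_surjective _ y
    exact ⟨(y, z + a y), by simp [g1]⟩) (by
    ext ⟨y, z⟩
    rw [LinearMap.mem_ker, LinearMap.mem_range]
    constructor
    · intro h
      have h1 : Submodule.Quotient.mk (p := LinearMap.range f) y = 0 := congrArg Prod.fst h
      have h2 : z - a y = 0 := congrArg Prod.snd h
      obtain ⟨x, rfl⟩ := (Submodule.Quotient.mk_eq_zero _).mp h1
      rw [ha, sub_eq_zero] at h2
      exact ⟨x, by rw [h2]; rfl⟩
    · rintro ⟨x, hx⟩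
      have h1 : f x = y := congrArg Prod.fst hx
      have h2 : f' x = z := congrArg Prod.snd hx
      subst h1 h2
      refine Prod.ext ((Submodule.Quotient.mk_eq_zero _).mpr ⟨x, rfl⟩) ?_
      show f' x - a (f x) = 0
      rw [ha, sub_self])
  obtain ⟨e2⟩ := aux_coker_iso F g2 (by
    rintro ⟨y, z⟩
    obtain ⟨y, rfl⟩ := Submodule.mkQ_surjective _ y
    exact ⟨(z + b y, y), by simp [g2]⟩) (by
    ext ⟨y, z⟩
    rw [LinearMap.mem_ker, LinearMap.mem_range]
    constructor
    · intro h
      have h1 : Submodule.Quotient.mk (p := LinearMap.range f') z = 0 := congrArg Prod.fst h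
      have h2 : y - b z = 0 := congrArg Prod.snd h
      obtain ⟨x, rfl⟩ := (Submodule.Quotient.mk_eq_zero _).mp h1
      rw [hb, sub_eq_zero] at h2
      exact ⟨x, by rw [h2]; rfl⟩
    · rintro ⟨x, hx⟩
      have h1 : f x = y := congrArg Prod.fst hx
      have h2 : f' x = z := congrArg Prod.snd hx
      subst h1 h2
      refine Prod.ext ((Submodule.Quotient.mk_eq_zero _).mpr ⟨x, rfl⟩) ?_
      show f x - b (f' x) = 0
      rw [hb, sub_self])
  exact (aux_cls_prod_proj ⟨(P × P' : Type u) ⧸ LinearMap.range F⟩ ⟨P ⧸ LinearMap.range f⟩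
    P' hf'.1 e1).symm.trans
    (aux_cls_prod_proj ⟨(P × P' : Type u) ⧸ LinearMap.range F⟩ ⟨P' ⧸ LinearMap.range f'⟩ P hf.1 e2)

theorem aux_apx_exists [IsNoetherianRing L] (M : FGMod L) :
    ∃ (P : FGMod L) (f : M →ₗ[Lᵐᵒᵖ] P), AuxApx M P f := by
  classical
  obtain ⟨n, p, hp⟩ := aux_exists_free M
  let ev : (M →ₗ[Lᵐᵒᵖ] L) →ₗ[L] (Fin n → L) :=
    { toFun := fun g i => g (p (Pi.single i 1))
      map_add' := fun g h => rfl
      map_smul' := fun r g => rfl }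
  have hev : Injective ev := by
    intro g h hgh
    have : g ∘ₗ p = h ∘ₗ p := by
      apply LinearMap.pi_ext
      intro i x
      have h1 : (Pi.single i x : Fin n → L) = op x • Pi.single i 1 := by
        rw [← Pi.single_smul]; simp
      have h2 : g (p (Pi.single i 1)) = h (p (Pi.single i 1)) := congrFun hgh i
      rw [h1, map_smul, map_smul, LinearMap.comp_apply, LinearMap.comp_apply, h2]
    ext x
    obtain ⟨y, rfl⟩ := hp x
    exact LinearMap.congr_fun this y
  have : IsNoetherian L (M →ₗ[Lᵐᵒᵖ] L) := isNoetherian_of_injective ev hev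
  obtain ⟨r, s, hs⟩ := Submodule.fg_iff_exists_fin_generating_family.mp
    (IsNoetherian.noetherian (⊤ : Submodule L (M →ₗ[Lᵐᵒᵖ] L)))
  refine ⟨⟨Fin r → L⟩, LinearMap.pi s, (inferInstance : Module.Projective Lᵐᵒᵖ (Fin r → L)), ?_⟩
  intro g
  have hg : g ∈ Submodule.span L (Set.range s) := by rw [hs]; trivial
  obtain ⟨c, rfl⟩ := (Submodule.mem_span_range_iff_exists_fun L).mp hg
  refine ⟨∑ i, auxLm (c i) ∘ₗ LinearMap.proj i, fun x => ?_⟩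
  simp [LinearMap.sum_apply, auxLm]

theorem aux_leftinv [IsNoetherianRing L] (hL : Module.Injective Lᵐᵒᵖ L)
    (OmK : AddMonoid.End (ITK L)) (hOm : IsSyzygyEnd L OmK) : Injective OmK := by
  choose P f hf using fun M : FGMod L => aux_apx_exists M
  obtain ⟨g, hg⟩ := aux_hom_lift (fun M : FGMod L => ITcls L ⟨P M ⧸ LinearMap.range (f M)⟩) (by
    rintro A B C ⟨e⟩
    let F : A →ₗ[Lᵐᵒᵖ] (P B × P C : Type u) := ((f B).prodMap (f C)) ∘ₗ e.toLinearMap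
    have hF : AuxApx A ⟨(P B × P C : Type u)⟩ F := by
      have : Module.Projective Lᵐᵒᵖ (P B) := (hf B).1
      have : Module.Projective Lᵐᵒᵖ (P C) := (hf C).1
      refine ⟨(inferInstance : Module.Projective Lᵐᵒᵖ (P B × P C)), fun g => ?_⟩
      obtain ⟨t1, ht1⟩ := (hf B).2 (g ∘ₗ e.symm.toLinearMap ∘ₗ LinearMap.inl _ _ _)
      obtain ⟨t2, ht2⟩ := (hf C).2 (g ∘ₗ e.symm.toLinearMap ∘ₗ LinearMap.inr _ _ _)
      refine ⟨t1.coprod t2, fun x => ?_⟩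
      obtain ⟨⟨y, z⟩, rfl⟩ := e.symm.surjective x
      have h1 := ht1 y
      have h2 := ht2 z
      simp only [F, LinearMap.comp_apply, LinearEquiv.coe_coe, LinearEquiv.apply_symm_apply,
        LinearMap.prodMap_apply, LinearMap.coprod_apply, h1, h2, LinearMap.inl_apply,
        LinearMap.inr_apply]
      rw [← map_add, ← map_add]
      simp
    rw [aux_apx_eq (hf A) hF]
    obtain ⟨e'⟩ := aux_coker_iso F (((LinearMap.range (f B)).mkQ).prodMap (LinearMap.range (f C)).mkQ)
      (by
        rintro ⟨y, z⟩
        obtain ⟨y, rfl⟩ := Submodule.mkQ_surjective _ y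
        obtain ⟨z, rfl⟩ := Submodule.mkQ_surjective _ z
        exact ⟨(y, z), rfl⟩) (by
        ext ⟨y, z⟩
        simp only [F, LinearMap.mem_ker, LinearMap.prodMap_apply, Prod.mk_eq_zero,
          Submodule.mkQ_apply, Submodule.Quotient.mk_eq_zero, LinearMap.mem_range,
          LinearMap.comp_apply, LinearEquiv.coe_coe]
        constructor
        · rintro ⟨⟨u, rfl⟩, ⟨v, rfl⟩⟩
          exact ⟨e.symm (u, v), by simp⟩
        · rintro ⟨x, hx⟩
          exact ⟨⟨(e x).1, congrArg Prod.fst hx⟩, ⟨(e x).2, congrArg Prod.snd hx⟩⟩)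
    exact aux_cls_prod _ ⟨P B ⧸ LinearMap.range (f B)⟩ ⟨P C ⧸ LinearMap.range (f C)⟩ e') (by
    intro Q hQ
    have hid : AuxApx Q Q LinearMap.id := ⟨hQ, fun g => ⟨g, fun x => rfl⟩⟩
    show ITcls L ⟨P Q ⧸ LinearMap.range (f Q)⟩ = 0
    rw [aux_apx_eq (hf Q) hid]
    apply aux_cls_proj
    have : Subsingleton (Q ⧸ LinearMap.range (LinearMap.id : Q →ₗ[Lᵐᵒᵖ] Q)) := by
      rw [LinearMap.range_id]
      exact Submodule.Quotient.subsingleton_iff.mpr rfl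
    exact (inferInstance : Module.Projective Lᵐᵒᵖ
      (Q ⧸ LinearMap.range (LinearMap.id : Q →ₗ[Lᵐᵒᵖ] Q))))
  have hgO : g.comp (OmK : ITK L →+ ITK L) = AddMonoidHom.id _ := by
    apply aux_hom_ext
    intro M
    obtain ⟨Q, q, hq⟩ := aux_exists_cover M
    have h1 : OmK (ITcls L M) = ITcls L ⟨LinearMap.ker q⟩ :=
      aux_Om_ker OmK hOm M Q q hq.1 hq.2.1
    show g (OmK (ITcls L M)) = ITcls L M
    rw [h1, hg]
    have hapx : AuxApx ⟨LinearMap.ker q⟩ Q (LinearMap.ker q).subtype :=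
      ⟨hq.1, fun g => hL.out _ (Submodule.injective_subtype _) g⟩
    rw [aux_apx_eq (hf _) hapx]
    obtain ⟨e⟩ := aux_coker_iso (LinearMap.ker q).subtype q hq.2.1 (by simp)
    exact aux_cls_iso _ M e
  intro x y hxy
  have h1 := DFunLike.congr_fun hgO x
  have h2 := DFunLike.congr_fun hgO y
  simp only [AddMonoidHom.comp_apply, AddMonoidHom.id_apply] at h1 h2
  rw [← h1, ← h2]
  exact congrArg g hxy

theorem aux_forward (OmK : AddMonoid.End (ITK L)) (h : Injective OmK) (M : FGMod L) :
    phiIT L OmK M = 0 := by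
  have hpow : ∀ i, Injective (OmK ^ i : AddMonoid.End (ITK L)) := by
    intro i
    induction i with
    | zero => intro x y hxy; exact hxy
    | succ n ih => rw [pow_succ]; exact ih.comp h
  have hrk : ∀ i, rkIT L ((ITgen L M).map ((OmK ^ i : AddMonoid.End (ITK L)) : ITK L →+ ITK L)) =
      rkIT L (ITgen L M) := by
    intro i
    have e := AddSubgroup.equivMapOfInjective (ITgen L M)
      ((OmK ^ i : AddMonoid.End (ITK L)) : ITK L →+ ITK L) (hpow i)
    exact (LinearEquiv.finrank_eq e.toIntLinearEquiv).symm
  apply Nat.eq_zero_of_le_zero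
  apply Nat.sInf_le
  intro i _
  rw [hrk, hrk]

end ITbasic

section ITback
open MulOpposite
variable {L : Type u} [Ring L]

/-- summand via a section-retraction pair -/
def AuxSum (N M : FGMod L) : Prop :=
  ∃ (i : N →ₗ[Lᵐᵒᵖ] M) (p : M →ₗ[Lᵐᵒᵖ] N), ∀ x, p (i x) = x

theorem AuxSum.isSummand {N M : FGMod L} (h : AuxSum N M) : N.IsSummand M := by
  obtain ⟨i, p, hip⟩ := h
  have hi : Injective i := fun x y hxy => by rw [← hip x, ← hip y, hxy]
  refine ⟨LinearMap.range i, LinearMap.ker p, ⟨?_, ?_⟩, ⟨LinearEquiv.ofInjective i hi⟩⟩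
  · rw [Submodule.disjoint_def]
    rintro _ ⟨y, rfl⟩ hy
    rw [LinearMap.mem_ker, hip] at hy
    rw [hy, map_zero]
  · rw [codisjoint_iff_le_sup]
    intro x _
    refine Submodule.mem_sup.mpr ⟨i (p x), ⟨_, rfl⟩, x - i (p x), ?_, by abel⟩
    rw [LinearMap.mem_ker, map_sub, hip, sub_self]

theorem aux_sum_of {N M : FGMod L} (h : N.IsSummand M) : AuxSum N M := by
  obtain ⟨A, B, hAB, ⟨e⟩⟩ := h
  refine ⟨A.subtype ∘ₗ e.toLinearMap, e.symm.toLinearMap ∘ₗ Submodule.projectionOnto A B hAB, ?_⟩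
  intro x
  simp

theorem AuxSum.trans {N M K : FGMod L} (h : AuxSum N M) (h' : AuxSum M K) : AuxSum N K := by
  obtain ⟨i, p, hip⟩ := h
  obtain ⟨i', p', hip'⟩ := h'
  exact ⟨i' ∘ₗ i, p ∘ₗ p', fun x => by simp [hip, hip']⟩

theorem aux_sum_left {M A B : FGMod L} (e : M ≃ₗ[Lᵐᵒᵖ] (A × B : Type u)) : AuxSum A M :=
  ⟨e.symm.toLinearMap ∘ₗ LinearMap.inl _ _ _, LinearMap.fst _ _ _ ∘ₗ e.toLinearMap,
    fun x => by simp⟩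

theorem aux_sum_right {M A B : FGMod L} (e : M ≃ₗ[Lᵐᵒᵖ] (A × B : Type u)) : AuxSum B M :=
  ⟨e.symm.toLinearMap ∘ₗ LinearMap.inr _ _ _, LinearMap.snd _ _ _ ∘ₗ e.toLinearMap,
    fun x => by simp⟩

variable [IsArtinianRing Lᵐᵒᵖ]

theorem aux_local {N : FGMod L} (hN : N.Indec) (u v : Module.End Lᵐᵒᵖ N) (huv : u + v = 1) :
    IsUnit u ∨ IsUnit v := by
  obtain ⟨n, hn, hc⟩ := ((Filter.eventually_ge_atTop 1).and
    (LinearMap.eventually_isCompl_ker_pow_range_pow u)).exists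
  rcases hN.2 _ _ hc with h | h
  · left
    have h1 : Injective (u ^ n) := LinearMap.ker_eq_bot.mp h
    obtain ⟨m, rfl⟩ := Nat.exists_eq_add_of_le' hn
    have h2 : Injective u := by
      rw [pow_succ] at h1
      exact Injective.of_comp (f := (u ^ m : Module.End Lᵐᵒᵖ N)) h1
    exact (Module.End.isUnit_iff u).mpr (IsArtinian.bijective_of_injective_endomorphism u h2)
  · right
    have h1 : IsNilpotent u := ⟨n, LinearMap.range_eq_bot.mp h⟩
    have : v = 1 - u := by rw [← huv]; abel
    rw [this]
    exact h1.isUnit_one_sub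

theorem aux_sum_unit {N A : FGMod L} (f : N →ₗ[Lᵐᵒᵖ] A) (g : A →ₗ[Lᵐᵒᵖ] N)
    (h : IsUnit (g ∘ₗ f : Module.End Lᵐᵒᵖ N)) : AuxSum N A := by
  obtain ⟨w, hw⟩ := h.exists_left_inv
  exact ⟨f, w ∘ₗ g, fun x => LinearMap.congr_fun hw x⟩

theorem aux_sum_prod {N M A B : FGMod L} (hN : N.Indec) (h : AuxSum N M)
    (e : M ≃ₗ[Lᵐᵒᵖ] (A × B : Type u)) : AuxSum N A ∨ AuxSum N B := by
  obtain ⟨i, p, hip⟩ := h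
  let fA : N →ₗ[Lᵐᵒᵖ] A := LinearMap.fst _ _ _ ∘ₗ e.toLinearMap ∘ₗ i
  let fB : N →ₗ[Lᵐᵒᵖ] B := LinearMap.snd _ _ _ ∘ₗ e.toLinearMap ∘ₗ i
  let gA : A →ₗ[Lᵐᵒᵖ] N := p ∘ₗ e.symm.toLinearMap ∘ₗ LinearMap.inl _ _ _
  let gB : B →ₗ[Lᵐᵒᵖ] N := p ∘ₗ e.symm.toLinearMap ∘ₗ LinearMap.inr _ _ _
  rcases aux_local hN (gA ∘ₗ fA) (gB ∘ₗ fB) (by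
    ext x
    show p (e.symm ((e (i x)).1, 0)) + p (e.symm (0, (e (i x)).2)) = x
    rw [← map_add, ← map_add]
    simp [hip]) with h | h
  · exact Or.inl (aux_sum_unit _ _ h)
  · exact Or.inr (aux_sum_unit _ _ h)

theorem aux_ind (P : FGMod L → Prop) (h0 : ∀ M : FGMod L, Subsingleton M → P M)
    (h1 : ∀ M : FGMod L, M.Indec → P M)
    (h2 : ∀ M A B : FGMod L, (M ≃ₗ[Lᵐᵒᵖ] (A × B : Type u)) → P A → P B → P M) (M : FGMod L) :
    P M := by
  induction hn : (Module.length Lᵐᵒᵖ M).toNat using Nat.strong_induction_on generalizing M with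
  | _ n ih =>
    rcases subsingleton_or_nontrivial M with hM | hM
    · exact h0 M hM
    by_cases hI : M.Indec
    · exact h1 M hI
    have : ∃ A B : Submodule Lᵐᵒᵖ M, IsCompl A B ∧ A ≠ ⊥ ∧ B ≠ ⊥ := by
      by_contra hcon
      push Not at hcon
      exact hI ⟨hM, fun A B hAB => or_iff_not_imp_left.mpr (hcon A B hAB)⟩
    obtain ⟨A, B, hAB, hA, hB⟩ := this
    have hA' : A ≠ ⊤ := fun h => hB (by simpa [h] using hAB.disjoint)
    have hB' : B ≠ ⊤ := fun h => hA (by simpa [h] using hAB.disjoint)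
    refine h2 M ⟨A⟩ ⟨B⟩ (Submodule.prodEquivOfIsCompl A B hAB).symm ?_ ?_
    · exact ih _ (hn ▸ aux_toNat_lt (Submodule.length_lt hA') Module.length_ne_top) ⟨A⟩ rfl
    · exact ih _ (hn ▸ aux_toNat_lt (Submodule.length_lt hB') Module.length_ne_top) ⟨B⟩ rfl

theorem aux_finite_cls (M : FGMod L) : ∃ T : Set (ITK L), T.Finite ∧
    ∀ N : FGMod L, AuxSum N M → N.Indec → ITcls L N ∈ T := by
  induction M using aux_ind with
  | h0 M hM =>
    refine ⟨∅, Set.finite_empty, ?_⟩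
    rintro N ⟨i, p, hip⟩ hN
    have := hN.1
    obtain ⟨x, y, hxy⟩ := exists_pair_ne N
    exact absurd (by rw [← hip x, ← hip y, Subsingleton.elim (i x) (i y)]) hxy
  | h1 M hM =>
    refine ⟨{ITcls L M}, Set.finite_singleton _, ?_⟩
    intro N hs hN
    obtain ⟨A, B, hAB, ⟨e⟩⟩ := hs.isSummand
    rcases hM.2 A B hAB with rfl | rfl
    · have := hN.1
      exact absurd (e.toEquiv.subsingleton) (not_subsingleton N)
    · have hA : A = ⊤ := by simpa using hAB.codisjoint
      subst hA
      exact aux_cls_iso N M (e.trans Submodule.topEquiv)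
  | h2 M A B e hA hB =>
    obtain ⟨T, hT, h⟩ := hA
    obtain ⟨T', hT', h'⟩ := hB
    refine ⟨T ∪ T', hT.union hT', fun N hs hN => ?_⟩
    rcases aux_sum_prod hN hs e with hs | hs
    · exact Or.inl (h N hs hN)
    · exact Or.inr (h' N hs hN)

theorem aux_mem_gen (M N : FGMod L) (h : AuxSum N M) : ITcls L N ∈ ITgen L M := by
  induction N using aux_ind with
  | h0 N hN =>
    rw [aux_cls_proj N (inferInstance : Module.Projective Lᵐᵒᵖ N)]
    exact zero_mem _
  | h1 N hN =>
    by_cases hp : N.Proj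
    · rw [aux_cls_proj N hp]
      exact zero_mem _
    · exact AddSubgroup.subset_closure ⟨N, h.isSummand, hN, hp, rfl⟩
  | h2 N A B e hA hB =>
    rw [aux_cls_prod N A B e]
    exact add_mem (hA ((aux_sum_left e).trans h)) (hB ((aux_sum_right e).trans h))

theorem aux_gen_fg (M : FGMod L) : (AddSubgroup.toIntSubmodule (ITgen L M)).FG := by
  obtain ⟨T, hT, h⟩ := aux_finite_cls M
  have hf : {x | ∃ N : FGMod L, N.IsSummand M ∧ N.Indec ∧ ¬N.Proj ∧ x = ITcls L N}.Finite :=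
    hT.subset (by rintro x ⟨N, hs, hN, -, rfl⟩; exact h N (aux_sum_of hs) hN)
  rw [Submodule.fg_iff_addSubgroup_fg]
  exact (AddSubgroup.fg_iff _).mpr ⟨_, rfl, hf⟩

theorem aux_rank {K : Type u} [AddCommGroup K] (f : AddMonoid.End K) (H : AddSubgroup K)
    (hH : (AddSubgroup.toIntSubmodule H).FG)
    (h0 : sInf {n | ∀ i, n ≤ i →
      Module.finrank ℤ (AddSubgroup.toIntSubmodule (H.map ((f ^ i : AddMonoid.End K) : K →+ K))) =
      Module.finrank ℤ (AddSubgroup.toIntSubmodule (H.map ((f ^ n : AddMonoid.End K) : K →+ K)))}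
       = 0) (x : K) (hx : x ∈ H) (hfx : f x = 0) : ∃ n : ℤ, n ≠ 0 ∧ n • x = 0 := by
  let F : ℕ → (K →ₗ[ℤ] K) := fun i => ((f ^ i : AddMonoid.End K) : K →+ K).toIntLinearMap
  let H' := AddSubgroup.toIntSubmodule H
  have hmap : ∀ i, AddSubgroup.toIntSubmodule (H.map ((f ^ i : AddMonoid.End K) : K →+ K)) =
      H'.map (F i) := fun i => rfl
  let r : ℕ → ℕ := fun i => Module.finrank ℤ (H'.map (F i))
  have hanti : Antitone r := by
    apply antitone_nat_of_succ_le
    intro n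
    have h1 : F (n+1) = F 1 ∘ₗ F n := by
      ext y
      show (f ^ (n+1)) y = (f ^ 1) ((f ^ n) y)
      rw [pow_succ', pow_one]; rfl
    have : Module.Finite ℤ (H'.map (F n)) := Module.Finite.iff_fg.mpr (hH.map _)
    show Module.finrank ℤ (H'.map (F (n+1))) ≤ Module.finrank ℤ (H'.map (F n))
    rw [h1, Submodule.map_comp]
    exact Submodule.finrank_map_le _ _
  have hmem := Nat.sInf_mem (s := {n | ∀ i, n ≤ i → r i = r n}) (by
    obtain ⟨n, hn⟩ := Nat.sInf_mem (Set.range_nonempty r)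
    refine ⟨n, fun i hi => le_antisymm (hanti hi) ?_⟩
    rw [hn]
    exact Nat.sInf_le ⟨i, rfl⟩)
  have h0' : sInf {n | ∀ i, n ≤ i → r i = r n} = 0 := h0
  rw [h0'] at hmem
  have h1 : r 1 = r 0 := hmem 1 (by omega)
  have hH0 : H'.map (F 0) = H' := by
    have : F 0 = LinearMap.id := rfl
    rw [this, Submodule.map_id]
  have : Module.Finite ℤ H' := Module.Finite.iff_fg.mpr hH
  let g : H' →ₗ[ℤ] K := (F 1).domRestrict H'
  have hrn := Submodule.finrank_quotient_add_finrank (LinearMap.ker g)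
  rw [g.quotKerEquivRange.finrank_eq] at hrn
  have hr : Module.finrank ℤ (LinearMap.range g) = Module.finrank ℤ H' := by
    have h2 : Module.finrank ℤ (H'.map (F 1)) = Module.finrank ℤ (H'.map (F 0)) := h1
    rw [hH0] at h2
    rw [← h2, LinearMap.range_domRestrict]
  have hk : Module.finrank ℤ (LinearMap.ker g) = 0 := by omega
  obtain ⟨n, hn, hnx⟩ := Module.finrank_eq_zero_iff.mp hk ⟨⟨x, hx⟩, by
    rw [LinearMap.mem_ker]
    show (f ^ 1) x = 0
    rw [pow_one, hfx]⟩
  exact ⟨n, hn, congrArg (fun y => y.1.1) hnx⟩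

end ITback

section ITback2
open MulOpposite
variable {L : Type u} [Ring L] [IsArtinianRing Lᵐᵒᵖ]

theorem aux_subfunctor (U : ∀ M : FGMod L, Submodule Lᵐᵒᵖ M)
    (hU : ∀ (M N : FGMod L) (f : M →ₗ[Lᵐᵒᵖ] N), ∀ x ∈ U M, f x ∈ U N)
    (A B C : FGMod L) (e : A ≃ₗ[Lᵐᵒᵖ] (B × C : Type u)) :
    ((Module.length Lᵐᵒᵖ (U A)).toNat : ℤ) =
      (Module.length Lᵐᵒᵖ (U B)).toNat + (Module.length Lᵐᵒᵖ (U C)).toNat := by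
  let g : U A →ₗ[Lᵐᵒᵖ] (U B × U C : Type u) :=
    ((LinearMap.fst _ _ _ ∘ₗ e.toLinearMap).restrict (hU A B _)).prod
      ((LinearMap.snd _ _ _ ∘ₗ e.toLinearMap).restrict (hU A C _))
  have hg : Bijective g := by
    constructor
    · intro x y hxy
      have h1 : (e x).1 = (e y).1 := congrArg (fun z => z.1.1) hxy
      have h2 : (e x).2 = (e y).2 := congrArg (fun z => z.2.1) hxy
      exact Subtype.ext (e.injective (Prod.ext h1 h2))
    · rintro ⟨⟨b, hb⟩, ⟨c, hc⟩⟩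
      have h1 := hU B A (e.symm.toLinearMap ∘ₗ LinearMap.inl _ _ _) b hb
      have h2 := hU C A (e.symm.toLinearMap ∘ₗ LinearMap.inr _ _ _) c hc
      refine ⟨⟨_, add_mem h1 h2⟩, ?_⟩
      refine Prod.ext (Subtype.ext ?_) (Subtype.ext ?_)
      · show (e (e.symm (b, 0) + e.symm (0, c))).1 = b
        simp
      · show (e (e.symm (b, 0) + e.symm (0, c))).2 = c
        simp
  rw [(LinearEquiv.ofBijective g hg).length_eq, Module.length_prod,
    ENat.toNat_add Module.length_ne_top Module.length_ne_top]
  push_cast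
  rfl

/-- trace of `S` in `M` -/
def auxTr (S M : FGMod L) : Submodule Lᵐᵒᵖ M := ⨆ a : S →ₗ[Lᵐᵒᵖ] M, LinearMap.range a

/-- reject of `S` in `M` -/
def auxRej (S M : FGMod L) : Submodule Lᵐᵒᵖ M := ⨅ b : M →ₗ[Lᵐᵒᵖ] S, LinearMap.ker b

theorem auxTr_map (S M N : FGMod L) (f : M →ₗ[Lᵐᵒᵖ] N) : ∀ x ∈ auxTr S M, f x ∈ auxTr S N := by
  have : auxTr S M ≤ (auxTr S N).comap f := by
    apply iSup_le
    rintro a _ ⟨y, rfl⟩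
    exact Submodule.mem_iSup_of_mem (f ∘ₗ a) ⟨y, rfl⟩
  exact this

theorem auxRej_map (S M N : FGMod L) (f : M →ₗ[Lᵐᵒᵖ] N) :
    ∀ x ∈ auxRej S M, f x ∈ auxRej S N := by
  intro x hx
  rw [auxRej, Submodule.mem_iInf] at hx ⊢
  intro b
  exact hx (b ∘ₗ f)

/-- multiplicity of `S` -/
noncomputable def auxMul (S M : FGMod L) : ℤ :=
  ((Module.length Lᵐᵒᵖ (auxTr S M)).toNat : ℤ) -
    ((Module.length Lᵐᵒᵖ (auxTr S M ⊓ auxRej S M : Submodule Lᵐᵒᵖ M)).toNat : ℤ)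

theorem auxMul_ne (S M : FGMod L) (h : ¬ auxTr S M ≤ auxRej S M) :
    ∃ (a : S →ₗ[Lᵐᵒᵖ] M) (b : M →ₗ[Lᵐᵒᵖ] S), b ∘ₗ a ≠ 0 := by
  by_contra hcon
  push Not at hcon
  apply h
  apply iSup_le
  rintro a _ ⟨y, rfl⟩
  rw [auxRej, Submodule.mem_iInf]
  intro b
  exact LinearMap.congr_fun (hcon a b) y

theorem auxMul_zero (S M : FGMod L) (h : auxTr S M ≤ auxRej S M) : auxMul S M = 0 := by
  rw [auxMul, inf_of_le_left h, sub_self]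

theorem auxMul_self (S : FGMod L) [Nontrivial S] : auxMul S S ≠ 0 := by
  have h1 : auxTr S S = ⊤ := by
    rw [eq_top_iff]
    exact le_trans (by simp) (le_iSup _ (LinearMap.id : S →ₗ[Lᵐᵒᵖ] S))
  have h2 : auxRej S S = ⊥ := by
    rw [eq_bot_iff]
    exact le_trans (iInf_le _ (LinearMap.id : S →ₗ[Lᵐᵒᵖ] S)) (by simp)
  rw [auxMul, h1, h2, inf_bot_eq, Module.length_bot, Module.length_top]
  have : 0 < Module.length Lᵐᵒᵖ S := Module.length_pos
  have := aux_toNat_lt this Module.length_ne_top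
  rw [ENat.toNat_zero] at this ⊢
  omega

theorem aux_simple_iso {S : FGMod L} (hS : IsSimpleModule Lᵐᵒᵖ S) (f : S →ₗ[Lᵐᵒᵖ] S)
    (h : f ≠ 0) : ∃ g : S →ₗ[Lᵐᵒᵖ] S, ∀ x, g (f x) = x := by
  let e := LinearEquiv.ofBijective f (LinearMap.bijective_of_ne_zero h)
  exact ⟨e.symm.toLinearMap, fun x => e.symm_apply_apply x⟩

theorem aux_simple_iso' {S : FGMod L} (hS : IsSimpleModule Lᵐᵒᵖ S) (f : S →ₗ[Lᵐᵒᵖ] S)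
    (h : f ≠ 0) : ∃ g : S →ₗ[Lᵐᵒᵖ] S, ∀ x, f (g x) = x := by
  let e := LinearEquiv.ofBijective f (LinearMap.bijective_of_ne_zero h)
  exact ⟨e.symm.toLinearMap, fun x => e.apply_symm_apply x⟩

theorem aux_simple_proj {S : FGMod L} (hS : IsSimpleModule Lᵐᵒᵖ S) (P : FGMod L) (hP : P.Proj)
    (a : S →ₗ[Lᵐᵒᵖ] P) (b : P →ₗ[Lᵐᵒᵖ] S) (h : b ∘ₗ a ≠ 0) : S.Proj := by
  obtain ⟨g, hg⟩ := aux_simple_iso hS _ h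
  have : Module.Projective Lᵐᵒᵖ P := hP
  exact Module.Projective.of_split a (g ∘ₗ b) (LinearMap.ext hg)

theorem auxMul_hom (S : FGMod L) (hS : IsSimpleModule Lᵐᵒᵖ S) (hp : ¬ S.Proj) :
    ∃ f : ITK L →+ ℤ, ∀ M, f (ITcls L M) = auxMul S M := by
  apply aux_hom_lift
  · rintro A B C ⟨e⟩
    have h1 := aux_subfunctor (auxTr S) (auxTr_map S) A B C e
    have h2 := aux_subfunctor (fun M => auxTr S M ⊓ auxRej S M)
      (fun M N f x hx => ⟨auxTr_map S M N f x hx.1, auxRej_map S M N f x hx.2⟩) A B C e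
    simp only [auxMul]
    rw [h1]
    rw [h2]
    ring
  · intro P hP
    apply auxMul_zero
    by_contra h
    obtain ⟨a, b, hab⟩ := auxMul_ne S P h
    exact hp (aux_simple_proj hS P hP a b hab)

theorem aux_split (OmK : AddMonoid.End (ITK L)) (hOm : IsSyzygyEnd L OmK)
    (hphi : ∀ M, phiIT L OmK M = 0) (P E S : FGMod L) (hP : P.Proj)
    (hS : IsSimpleModule Lᵐᵒᵖ S) (ι : P →ₗ[Lᵐᵒᵖ] E) (π : E →ₗ[Lᵐᵒᵖ] S)
    (hι : Injective ι) (hπ : Surjective π) (hex : LinearMap.ker π = LinearMap.range ι) :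
    ∃ s : S →ₗ[Lᵐᵒᵖ] E, ∀ x, π (s x) = x := by
  have hP' : Module.Projective Lᵐᵒᵖ P := hP
  by_cases hSp : S.Proj
  · have : Module.Projective Lᵐᵒᵖ S := hSp
    obtain ⟨s, hs⟩ := Module.projective_lifting_property π LinearMap.id hπ
    exact ⟨s, fun x => LinearMap.congr_fun hs x⟩
  obtain ⟨Q, q, hQ, hq, -⟩ := aux_exists_cover E
  have hO1 := aux_Om_ker OmK hOm E Q q hQ hq
  have hO2 := aux_Om_ker OmK hOm S Q (π ∘ₗ q) hQ (hπ.comp hq)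
  obtain ⟨s0, hs0⟩ := Module.projective_lifting_property q ι hq
  have hs0' : ∀ x, q (s0 x) = ι x := fun x => LinearMap.congr_fun hs0 x
  have hπι : ∀ x, π (ι x) = 0 := fun x => by
    have : ι x ∈ LinearMap.ker π := by rw [hex]; exact ⟨x, rfl⟩
    exact this
  let g0 : (LinearMap.ker q × P : Type u) →ₗ[Lᵐᵒᵖ] Q := (LinearMap.ker q).subtype.coprod s0
  have hg0 : ∀ k p, g0 (k, p) = k.1 + s0 p := fun k p => by simp [g0]
  let g : (LinearMap.ker q × P : Type u) →ₗ[Lᵐᵒᵖ] LinearMap.ker (π ∘ₗ q) :=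
    g0.codRestrict _ (by
      rintro ⟨⟨k, hk⟩, p⟩
      rw [LinearMap.mem_ker] at hk ⊢
      rw [hg0, LinearMap.comp_apply, map_add, hk, hs0', zero_add, hπι])
  have hg : Bijective g := by
    constructor
    · rw [← LinearMap.ker_eq_bot, LinearMap.ker_eq_bot']
      rintro ⟨⟨k, hk⟩, p⟩ h
      have h1 : k + s0 p = 0 := by
        have := congrArg Subtype.val h
        rw [← hg0 ⟨k, hk⟩ p]
        exact this
      have h2 : ι p = 0 := by
        have := congrArg q h1
        rw [map_add, LinearMap.mem_ker.mp hk, zero_add, hs0', map_zero] at this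
        exact this
      have h3 : p = 0 := hι (by rw [h2, map_zero])
      subst h3
      rw [map_zero, add_zero] at h1
      subst h1
      rfl
    · rintro ⟨x, hx⟩
      have : q x ∈ LinearMap.range ι := by rw [← hex]; exact hx
      obtain ⟨p, hp⟩ := this
      refine ⟨(⟨x - s0 p, ?_⟩, p), Subtype.ext ?_⟩
      · rw [LinearMap.mem_ker, map_sub, hs0', hp, sub_self]
      · show g0 _ = x
        rw [hg0]
        simp
  have hcl := aux_cls_prod_proj ⟨LinearMap.ker (π ∘ₗ q)⟩ ⟨LinearMap.ker q⟩ P hP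
    (LinearEquiv.ofBijective g hg).symm
  let X : FGMod L := ⟨(E × S : Type u)⟩
  have hmem : ITcls L E - ITcls L S ∈ ITgen L X :=
    sub_mem (aux_mem_gen X E (aux_sum_left (LinearEquiv.refl _ _)))
      (aux_mem_gen X S (aux_sum_right (LinearEquiv.refl _ _)))
  obtain ⟨n, hn, hnx⟩ := aux_rank OmK (ITgen L X) (aux_gen_fg X) (hphi X) _ hmem (by
    rw [map_sub, hO1, hO2, hcl, sub_self])
  obtain ⟨τ, hτ⟩ := auxMul_hom S hS hSp
  have h1 := congrArg τ hnx
  rw [map_zsmul, map_zero, map_sub, hτ, hτ, smul_eq_mul] at h1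
  have h2 : auxMul S E ≠ 0 := by
    have := (mul_eq_zero.mp h1).resolve_left hn
    have hnt : Nontrivial S := IsSimpleModule.nontrivial Lᵐᵒᵖ S
    have := auxMul_self S
    omega
  obtain ⟨a, b, hab⟩ := auxMul_ne S E (fun h => h2 (auxMul_zero S E h))
  by_cases hc : π ∘ₗ a = 0
  · exfalso
    have hr : ∀ x, a x ∈ LinearMap.range ι := fun x => by
      rw [← hex]; exact LinearMap.congr_fun hc x
    let a' : S →ₗ[Lᵐᵒᵖ] P :=
      (LinearEquiv.ofInjective ι hι).symm.toLinearMap ∘ₗ a.codRestrict (LinearMap.range ι) hr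
    have ha' : ι ∘ₗ a' = a := by
      ext x
      have := (LinearEquiv.ofInjective ι hι).apply_symm_apply ⟨a x, hr x⟩
      exact congrArg Subtype.val this
    apply hSp
    refine aux_simple_proj hS P hP a' (b ∘ₗ ι) ?_
    rw [LinearMap.comp_assoc, ha']
    exact hab
  · obtain ⟨g, hg⟩ := aux_simple_iso' hS _ hc
    exact ⟨a ∘ₗ g, hg⟩

theorem aux_extend (OmK : AddMonoid.End (ITK L)) (hOm : IsSyzygyEnd L OmK)
    (hphi : ∀ M, phiIT L OmK M = 0) (P X : FGMod L) (hP : P.Proj) (N : Submodule Lᵐᵒᵖ X)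
    (hS : IsSimpleModule Lᵐᵒᵖ (X ⧸ N)) (f : N →ₗ[Lᵐᵒᵖ] P) :
    ∃ f' : X →ₗ[Lᵐᵒᵖ] P, ∀ x : N, f' x = f x := by
  let K : Submodule Lᵐᵒᵖ (P × X : Type u) := LinearMap.range (f.prod (-N.subtype))
  have hK : ∀ x : N, (f x, -(x : X)) ∈ K := fun x => ⟨x, rfl⟩
  let E : FGMod L := ⟨(P × X : Type u) ⧸ K⟩
  let ι : P →ₗ[Lᵐᵒᵖ] E := K.mkQ ∘ₗ LinearMap.inl _ _ _
  let π : E →ₗ[Lᵐᵒᵖ] (X ⧸ N) := K.liftQ (N.mkQ ∘ₗ LinearMap.snd _ _ _) (by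
    rintro _ ⟨x, rfl⟩
    rw [LinearMap.mem_ker]
    show N.mkQ (-(x : X)) = 0
    rw [Submodule.mkQ_apply, Submodule.Quotient.mk_eq_zero]
    exact neg_mem x.2)
  have hι : Injective ι := by
    rw [← LinearMap.ker_eq_bot, LinearMap.ker_eq_bot']
    intro p hp
    obtain ⟨x, hx⟩ := (Submodule.Quotient.mk_eq_zero _).mp hp
    have h1 : f x = p := congrArg Prod.fst hx
    have h2 : -(x : X) = 0 := congrArg Prod.snd hx
    have h3 : x = 0 := Subtype.ext (neg_eq_zero.mp h2)
    rw [← h1, h3, map_zero]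
  have hπ : Surjective π := by
    intro y
    obtain ⟨x, rfl⟩ := Submodule.mkQ_surjective _ y
    exact ⟨K.mkQ (0, x), rfl⟩
  have hιx : ∀ x : N, ι (f x) = K.mkQ (0, (x : X)) := by
    intro x
    refine (Submodule.Quotient.eq K).mpr ?_
    have := hK x
    convert this using 1
    refine Prod.ext ?_ ?_
    · show f x - 0 = f x
      simp
    · show 0 - (x : X) = -(x : X)
      simp
  have hex : LinearMap.ker π = LinearMap.range ι := by
    ext e
    constructor
    · intro h
      obtain ⟨⟨p, x⟩, rfl⟩ := Submodule.mkQ_surjective _ e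
      have hx : x ∈ N := (Submodule.Quotient.mk_eq_zero _).mp h
      refine ⟨p + f ⟨x, hx⟩, ?_⟩
      rw [map_add, hιx]
      show K.mkQ (p, 0) + K.mkQ (0, x) = _
      rw [← map_add]
      simp
    · rintro ⟨p, rfl⟩
      show N.mkQ 0 = 0
      simp
  obtain ⟨s, hs⟩ := aux_split OmK hOm hphi P E ⟨X ⧸ N⟩ hP hS ι π hι hπ hex
  let r0 : E →ₗ[Lᵐᵒᵖ] E := LinearMap.id - s ∘ₗ π
  have hr : ∀ x, r0 x ∈ LinearMap.range ι := fun x => by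
    rw [← hex, LinearMap.mem_ker]
    show π (x - s (π x)) = 0
    rw [map_sub, hs, sub_self]
  let r : E →ₗ[Lᵐᵒᵖ] P :=
    (LinearEquiv.ofInjective ι hι).symm.toLinearMap ∘ₗ r0.codRestrict (LinearMap.range ι) hr
  have hrι : ∀ x, ι (r x) = r0 x := fun x => by
    have := (LinearEquiv.ofInjective ι hι).apply_symm_apply ⟨r0 x, hr x⟩
    exact congrArg Subtype.val this
  refine ⟨r ∘ₗ K.mkQ ∘ₗ LinearMap.inr _ _ _, fun x => ?_⟩
  apply hι
  show ι (r (K.mkQ (0, (x : X)))) = _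
  rw [hrι, ← hιx]
  have : π (ι (f x)) = 0 := by
    have : ι (f x) ∈ LinearMap.ker π := by rw [hex]; exact ⟨_, rfl⟩
    exact this
  show ι (f x) - s (π (ι (f x))) = _
  rw [this, map_zero, sub_zero]

theorem aux_baer (OmK : AddMonoid.End (ITK L)) (hOm : IsSyzygyEnd L OmK)
    (hphi : ∀ M, phiIT L OmK M = 0) : Module.Baer Lᵐᵒᵖ Lᵐᵒᵖ := by
  intro I
  induction I using WellFoundedGT.induction with
  | ind I ih =>
    intro f
    by_cases hI : I = ⊤
    · subst hI
      exact ⟨f ∘ₗ Submodule.topEquiv.symm.toLinearMap, fun x _ => rfl⟩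
    obtain ⟨J, hJ⟩ := exists_covBy_of_wellFoundedLT (a := I) (by rwa [isMax_iff_eq_top])
    have hS := (covBy_iff_quot_is_simple hJ.le).mp hJ
    obtain ⟨f', hf'⟩ := aux_extend OmK hOm hphi ⟨Lᵐᵒᵖ⟩ ⟨J⟩
      (inferInstance : Module.Projective Lᵐᵒᵖ Lᵐᵒᵖ) (Submodule.comap J.subtype I) hS
      (f ∘ₗ (J.subtype ∘ₗ (Submodule.comap J.subtype I).subtype).codRestrict I (fun x => x.2))
    obtain ⟨g, hg⟩ := ih J hJ.lt f'
    refine ⟨g, fun x hx => ?_⟩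
    rw [hg x (hJ.le hx)]
    exact hf' ⟨⟨x, hJ.le hx⟩, hx⟩

end ITback2

/-- An artin algebra `Λ` is self-injective (injective as a left and
as a right module over itself) iff `φ(M) = 0` for all f.g. right `Λ`-modules `M`. -/
theorem artinAlgebra_selfinjective_iff_phidim_eq_zero
    (k : Type u) [CommRing k] [IsArtinianRing k]
    (Λ : Type u) [Ring Λ] [Algebra k Λ] [Module.Finite k Λ]
    (OmK : AddMonoid.End (ITK Λ)) (hOm : IsSyzygyEnd Λ OmK) :
    (Module.Injective Λ Λ ∧ Module.Injective Λᵐᵒᵖ Λᵐᵒᵖ) ↔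
      ∀ M : FGMod Λ, phiIT Λ OmK M = 0 := by
  have : Module.Finite k Λᵐᵒᵖ := Module.Finite.equiv (MulOpposite.opLinearEquiv k)
  have : IsArtinianRing Λᵐᵒᵖ := IsArtinianRing.of_finite k Λᵐᵒᵖ
  have : IsNoetherianRing Λ := IsNoetherianRing.of_finite k Λ
  have tr : Module.Injective Λᵐᵒᵖ Λᵐᵒᵖ → Module.Injective Λᵐᵒᵖ Λ := fun h =>
    ((Module.Baer.of_injective h).of_equiv
      (MulOpposite.opLinearEquiv Λᵐᵒᵖ : Λ ≃ₗ[Λᵐᵒᵖ] Λᵐᵒᵖ).symm).injective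
  constructor
  · rintro ⟨-, h⟩ M
    exact aux_forward OmK (aux_leftinv (tr h) OmK hOm) M
  · intro h
    have h1 := (aux_baer OmK hOm h).injective
    exact ⟨aux_left_inj (tr h1), h1⟩
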